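/- Let 𝔤 be a finite-dimensional real Lie algebra whose derived algebra [𝔤,𝔤] is a proper subspace of 𝔤, let α be an inner product on 𝔤 and let V ∈ 𝔤 satisfy α(V,V) < 1. Then for any hyperplane W ⊂ 𝔤 containing [𝔤,𝔤] there exist geodesic vectors n₁, n₂ for (α, V) lying strictly on opposite sides of W; in particular, 𝔤 admits at least two geodesic vectors neither of which is a positive scalar multiple of the other. -/

import Mathlib

/-- A nonzero `X` is a geodesic vector for the data `(α, V)` of a left-invariant
Randers metric if `α (X + √(α X X) • V) ⁅X, U⁆ = 0` for all `U`. -/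
def IsGeodesicVector {L : Type*} [LieRing L] [LieAlgebra ℝ L]
    (α : L →ₗ[ℝ] L →ₗ[ℝ] ℝ) (V X : L) : Prop :=
  X ≠ 0 ∧ ∀ U : L, α (X + Real.sqrt (α X X) • V) ⁅X, U⁆ = 0

/-- A submodule of codimension one is the kernel of a linear functional. -/
lemma exists_ker_eq_of_finrank_quotient_eq_one {L : Type*} [AddCommGroup L] [Module ℝ L]
    (W : Submodule ℝ L) (hW : Module.finrank ℝ (L ⧸ W) = 1) :
    ∃ φ : L →ₗ[ℝ] ℝ, LinearMap.ker φ = W := by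
  have : FiniteDimensional ℝ (L ⧸ W) := Module.finite_of_finrank_eq_succ hW
  let e : (L ⧸ W) ≃ₗ[ℝ] ℝ := LinearEquiv.ofFinrankEq _ _ (by simp [hW])
  exact ⟨e.toLinearMap ∘ₗ W.mkQ, by rw [LinearEquiv.ker_comp, Submodule.ker_mkQ]⟩

/-- A positive definite bilinear form represents every linear functional. -/
lemma exists_eq_of_pos_def {L : Type*} [AddCommGroup L] [Module ℝ L] [FiniteDimensional ℝ L]
    (α : L →ₗ[ℝ] L →ₗ[ℝ] ℝ) (hpos : ∀ x, x ≠ 0 → 0 < α x x) (φ : L →ₗ[ℝ] ℝ) :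
    ∃ N : L, α N = φ := by
  have hinj : Function.Injective α := by
    refine (injective_iff_map_eq_zero α).2 fun x hx => ?_
    by_contra hne
    simpa [hx] using hpos x hne
  exact (LinearMap.injective_iff_surjective_of_finrank_eq_finrank
    (Subspace.dual_finrank_eq (K := ℝ) (V := L)).symm).1 hinj φ

/-- If `N` is orthogonal to all brackets and `P` differs from `V` by a multiple of `N`, then
`s • N - P` is a geodesic vector as soon as it has unit length. -/
lemma isGeodesicVector_smul_sub {L : Type*} [LieRing L] [LieAlgebra ℝ L]
    {α : L →ₗ[ℝ] L →ₗ[ℝ] ℝ} {V N : L} {s c : ℝ} (hN : ∀ x y : L, α N ⁅x, y⁆ = 0)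
    (hunit : α (s • N - (V - c • N)) (s • N - (V - c • N)) = 1) :
    IsGeodesicVector α V (s • N - (V - c • N)) := by
  refine ⟨fun h => by simp [h] at hunit, fun U => ?_⟩
  have hsum : s • N - (V - c • N) + (1 : ℝ) • V = (s + c) • N := by module
  rw [hunit, Real.sqrt_one, hsum, map_smul, LinearMap.smul_apply, hN, smul_zero]

/-- if the derived algebra [𝔤,𝔤] of a finite-dimensional real Lie
algebra 𝔤 is a proper subspace, then for any hyperplane W containing [𝔤,𝔤] there
are geodesic vectors n₁, n₂ for (α, V) strictly on opposite sides of W; in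
particular neither is a positive scalar multiple of the other. -/
theorem two_geodesic_vectors_of_proper_derived
    (L : Type*) [LieRing L] [LieAlgebra ℝ L] [FiniteDimensional ℝ L]
    (α : L →ₗ[ℝ] L →ₗ[ℝ] ℝ)
    (hsymm : ∀ x y, α x y = α y x)
    (hpos : ∀ x, x ≠ 0 → 0 < α x x)
    (V : L) (hV : α V V < 1)
    (hproper : Submodule.span ℝ {z : L | ∃ x y : L, ⁅x, y⁆ = z} ≠ ⊤)
    (W : Submodule ℝ L)
    (hWcodim : Module.finrank ℝ (L ⧸ W) = 1)
    (hWbrackets : ∀ x y : L, ⁅x, y⁆ ∈ W) :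
    ∃ (n₁ n₂ : L) (φ : L →ₗ[ℝ] ℝ),
      LinearMap.ker φ = W ∧ 0 < φ n₁ ∧ φ n₂ < 0 ∧
      IsGeodesicVector α V n₁ ∧ IsGeodesicVector α V n₂ ∧
      (∀ t : ℝ, 0 < t → n₁ ≠ t • n₂) ∧ (∀ t : ℝ, 0 < t → n₂ ≠ t • n₁) := by
  obtain ⟨φ, hφ⟩ := exists_ker_eq_of_finrank_quotient_eq_one W hWcodim
  obtain ⟨N, rfl⟩ := exists_eq_of_pos_def α hpos φ
  have hbr (x y : L) : α N ⁅x, y⁆ = 0 := by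
    rw [← LinearMap.mem_ker, hφ]
    exact hWbrackets x y
  have hN : N ≠ 0 := by
    rintro rfl
    have hW : W = ⊤ := by simpa using hφ.symm
    subst hW
    simp [Module.finrank_zero_of_subsingleton] at hWcodim
  have ha : 0 < α N N := hpos N hN
  set c : ℝ := α N V / α N N
  have hca : c * α N N = α N V := div_mul_cancel₀ _ ha.ne'
  have hunit (s : ℝ) (hs : s ^ 2 * α N N = 1 - (α V V - c ^ 2 * α N N)) :
      α (s • N - (V - c • N)) (s • N - (V - c • N)) = 1 := by
    simp only [map_sub, map_smul, LinearMap.sub_apply, LinearMap.smul_apply, smul_eq_mul,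
      hsymm V N]
    linear_combination hs + 2 * (s + c) * hca
  have hφX (s : ℝ) : α N (s • N - (V - c • N)) = s * α N N := by
    simp only [map_sub, map_smul, smul_eq_mul]
    linear_combination hca
  have hq : 0 < (1 - (α V V - c ^ 2 * α N N)) / α N N := by
    have : 0 ≤ c ^ 2 * α N N := by positivity
    exact div_pos (by linarith) ha
  set s : ℝ := √((1 - (α V V - c ^ 2 * α N N)) / α N N)
  have hs : 0 < s := Real.sqrt_pos.2 hq
  have hs2 : s ^ 2 * α N N = 1 - (α V V - c ^ 2 * α N N) := by
    rw [Real.sq_sqrt hq.le, div_mul_cancel₀ _ ha.ne']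
  have h₁ : 0 < α N (s • N - (V - c • N)) := by
    rw [hφX]
    positivity
  have h₂ : α N ((-s) • N - (V - c • N)) < 0 := by
    rw [hφX]
    exact mul_neg_of_neg_of_pos (neg_lt_zero.2 hs) ha
  refine ⟨_, _, α N, hφ, h₁, h₂, isGeodesicVector_smul_sub hbr (hunit s hs2),
    isGeodesicVector_smul_sub hbr (hunit (-s) (by rwa [neg_sq])), fun t ht h => ?_,
    fun t ht h => ?_⟩
  · rw [h, map_smul, smul_eq_mul] at h₁
    exact (mul_neg_of_pos_of_neg ht h₂).not_gt h₁
  · rw [h, map_smul, smul_eq_mul] at h₂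
    exact (mul_pos ht h₁).not_gt h₂
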